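/- Let b be a nonzero integer, let p be an odd prime that is a 0-Pisano-Legendre prime relative to (0,b), and let q ≥ 1 be an integer. Then the wheel graph W_{qπ_p(0,b)+1} on qπ_p(0,b)+1 vertices is a (0,b)-Fibonacci-Legendre cordial graph modulo p. -/

import Mathlib

/-!
Write `π = π_p(0,b)`, `N = qπ`, and label every vertex by itself, so that the hub gets
`F 0 = 0` and the rim gets `1, …, N` in cyclic order. The spoke to `j` carries the value `F j`, and
the rim edge `{j, j+1}` carries `F j + F (j+1) = F (j+2)`. The closing edge `{1, N}` carries
`F 1 + F N ≡ F 1 = F 2 ≡ F (N+2)`, because `N` is a multiple of the period and `F 0 = 0`. Hence the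
edge values are, modulo `p`, the sequence `F` over the two windows `1, …, N` and `3, …, N+2`, each
consisting of `q` full periods (up to a shift). The `0`-PL hypothesis says exactly that over one
full period squares are as many as non-squares and zeros together, so `e(0) = e(1)`.

The parametrisation of the edges needs `N ≥ 3`. The `0`-PL hypothesis excludes `p ∣ b` (there the
period is `1` and the balance is `-1`), and for `p ∤ b` periods `1` and `2` are impossible. The
value `π = 0` can only be the junk value of `sInf ∅`; in that case the graph has one vertex and the
claim is trivial, so the existence of a period is never needed.
-/

noncomputable section

/-- The `(a,b)`-Fibonacci sequence: `F 0 = a`, `F 1 = b`, `F (n+2) = F n + F (n+1)`. -/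
def fibAB (a b : ℤ) : ℕ → ℤ
  | 0 => a
  | 1 => b
  | n + 2 => fibAB a b n + fibAB a b (n + 1)

/-- The `(a,b)`-Pisano period of `p`: the least positive `k` with
`F (n + k) ≡ F n (mod p)` for all `n`. -/
def pisanoAB (a b : ℤ) (p : ℕ) : ℕ :=
  sInf {k : ℕ | 0 < k ∧ ∀ n : ℕ, fibAB a b (n + k) ≡ fibAB a b n [ZMOD (p : ℤ)]}

/-- `Λ_j^p(a,b)`: the indices `ξ ∈ {0, …, π_p(a,b) - 1}` with `(F_ξ / p) = j`,
where (for odd prime `p`) the Legendre symbol is given by `jacobiSym`. -/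
def LambdaSet (a b : ℤ) (p : ℕ) (j : ℤ) : Finset ℕ :=
  (Finset.range (pisanoAB a b p)).filter fun ξ => jacobiSym (fibAB a b ξ) p = j

/-- `p` is a `k`-Pisano–Legendre prime relative to `(a,b)`. -/
def IsPLPrime (a b : ℤ) (p : ℕ) (k : ℤ) : Prop :=
  k = ((LambdaSet a b p 1).card : ℤ) - ((LambdaSet a b p (-1)).card : ℤ)
      - ((LambdaSet a b p 0).card : ℤ)

/-- `χ(a,b)`: the set of integers `k` for which some odd prime is a `k`-PL prime
relative to `(a,b)`. -/
def chiSet (a b : ℤ) : Set ℤ :=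
  {k | ∃ p : ℕ, p.Prime ∧ Odd p ∧ IsPLPrime a b p k}

/-- The order of apparition `z(p)` of `p` in the classical Fibonacci sequence. -/
def apparition (p : ℕ) : ℕ :=
  sInf {n : ℕ | 0 < n ∧ (p : ℤ) ∣ fibAB 0 1 n}

/-- The induced edge label `f_p*` on an unordered pair of vertex labels. -/
def flcEdgeLabel (a b : ℤ) (p : ℕ) : Sym2 ℕ → ℕ :=
  Sym2.lift ⟨fun x y =>
    if (p : ℤ) ∣ (fibAB a b x + fibAB a b y) then 0
    else (1 + jacobiSym (fibAB a b x + fibAB a b y) p).toNat / 2,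
    fun x y => by dsimp only; rw [add_comm (fibAB a b x) (fibAB a b y)]⟩

/-- The number of edges of `G` receiving label `i` under the vertex labeling `f`. -/
def flcCount {V : Type*} (G : SimpleGraph V) (a b : ℤ) (p : ℕ) (f : V → ℕ) (i : ℕ) : ℕ :=
  {e ∈ G.edgeSet | flcEdgeLabel a b p (e.map f) = i}.ncard

/-- `G` is an `(a,b)`-Fibonacci–Legendre cordial graph modulo `p`: there is a bijective
vertex labeling by `{0, …, |V| - 1}` with `|e(0) - e(1)| ≤ 1`. -/
def IsFLCGraph {V : Type*} [Fintype V] (G : SimpleGraph V) (a b : ℤ) (p : ℕ) : Prop :=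
  ∃ f : V ≃ Fin (Fintype.card V),
    |(flcCount G a b p (fun v => ((f v : Fin (Fintype.card V)) : ℕ)) 0 : ℤ) -
      (flcCount G a b p (fun v => ((f v : Fin (Fintype.card V)) : ℕ)) 1 : ℤ)| ≤ 1

/-- The path graph on `n` vertices. -/
def pathG (n : ℕ) : SimpleGraph (Fin n) :=
  SimpleGraph.fromRel fun i j => (i : ℕ) + 1 = (j : ℕ)

/-- The cycle graph on `n` vertices: the path graph plus the edge between the
first and last vertex. -/
def cycleG (n : ℕ) : SimpleGraph (Fin n) :=
  SimpleGraph.fromRel fun i j => (i : ℕ) + 1 = (j : ℕ) ∨ ((i : ℕ) = 0 ∧ (j : ℕ) = n - 1)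

/-- The star graph on `n` vertices with central vertex `0`. -/
def starG (n : ℕ) : SimpleGraph (Fin n) :=
  SimpleGraph.fromRel fun i _ => (i : ℕ) = 0

/-- The wheel graph on `n` vertices: hub `0` joined to every vertex of the cycle on
`1, …, n-1`. -/
def wheelG (n : ℕ) : SimpleGraph (Fin n) :=
  SimpleGraph.fromRel fun i j =>
    (i : ℕ) = 0 ∨ (i : ℕ) + 1 = (j : ℕ) ∨ ((i : ℕ) = 1 ∧ (j : ℕ) = n - 1)

/-- Lexicographic product of graphs. -/
def lexProd {α β : Type*} (G : SimpleGraph α) (H : SimpleGraph β) : SimpleGraph (α × β) :=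
  SimpleGraph.fromRel fun x y => G.Adj x.1 y.1 ∨ (x.1 = y.1 ∧ H.Adj x.2 y.2)

/-- Cartesian product of graphs. -/
def cartProd {α β : Type*} (G : SimpleGraph α) (H : SimpleGraph β) : SimpleGraph (α × β) :=
  SimpleGraph.fromRel fun x y => (x.1 = y.1 ∧ H.Adj x.2 y.2) ∨ (x.2 = y.2 ∧ G.Adj x.1 y.1)

/-- Tensor product of graphs. -/
def tensorProd {α β : Type*} (G : SimpleGraph α) (H : SimpleGraph β) : SimpleGraph (α × β) :=
  SimpleGraph.fromRel fun x y => G.Adj x.1 y.1 ∧ H.Adj x.2 y.2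

/-- Strong product of graphs: union of the cartesian and tensor products. -/
def strongProd {α β : Type*} (G : SimpleGraph α) (H : SimpleGraph β) : SimpleGraph (α × β) :=
  cartProd G H ⊔ tensorProd G H

/-- Join of two graphs: both graphs together with all edges between them. -/
def joinG {α β : Type*} (G : SimpleGraph α) (H : SimpleGraph β) : SimpleGraph (α ⊕ β) :=
  SimpleGraph.fromRel fun x y =>
    match x, y with
    | Sum.inl u, Sum.inl v => G.Adj u v
    | Sum.inr u, Sum.inr v => H.Adj u v
    | Sum.inl _, Sum.inr _ => True
    | Sum.inr _, Sum.inl _ => True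

/-- Corona `G ∘ H`: one copy of `G`, a copy of `H` for each vertex of `G`, and the
`u`-th vertex of `G` joined to every vertex of the `u`-th copy of `H`. -/
def coronaG {α β : Type*} (G : SimpleGraph α) (H : SimpleGraph β) :
    SimpleGraph (α ⊕ α × β) :=
  SimpleGraph.fromRel fun x y =>
    match x, y with
    | Sum.inl u, Sum.inl v => G.Adj u v
    | Sum.inr (u, s), Sum.inr (v, t) => u = v ∧ H.Adj s t
    | Sum.inl u, Sum.inr (v, _) => u = v
    | Sum.inr (u, _), Sum.inl v => u = v

/-- Disjoint union of a family of graphs on a common vertex type. -/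
def unionFam {ι V : Type*} (Gs : ι → SimpleGraph V) : SimpleGraph (ι × V) :=
  SimpleGraph.fromRel fun x y => x.1 = y.1 ∧ (Gs x.1).Adj x.2 y.2

/-- The sign attached to index `n`: `1` if `F n` is a nonzero square mod `p` and `-1` otherwise. Its
sum over a period is the quantity `k` in the definition of a `k`-PL prime. -/
def flcSign (a b : ℤ) (p n : ℕ) : ℤ := if jacobiSym (fibAB a b n) p = 1 then 1 else -1

lemma flcSign_sum_pisano (a b : ℤ) (p : ℕ) :
    ∑ n ∈ Finset.range (pisanoAB a b p), flcSign a b p n =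
      ((LambdaSet a b p 1).card : ℤ) - ((LambdaSet a b p (-1)).card : ℤ)
      - ((LambdaSet a b p 0).card : ℤ) := by
  simp only [LambdaSet, Finset.card_filter, flcSign]
  push_cast
  rw [← Finset.sum_sub_distrib, ← Finset.sum_sub_distrib]
  refine Finset.sum_congr rfl fun n _ => ?_
  rcases jacobiSym.trichotomy (fibAB a b n) p with h | h | h <;> simp [h]

lemma sum_range_shift_of_period {T : ℕ → ℤ} {N : ℕ} (h : ∀ n, T (n + N) = T n) (c : ℕ) :
    ∑ k ∈ Finset.range N, T (k + c) = ∑ k ∈ Finset.range N, T k := by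
  induction c with
  | zero => rfl
  | succ c ih =>
    rw [← ih]
    have h1 := Finset.sum_range_succ (fun k => T (k + c)) N
    rw [Finset.sum_range_succ' (fun k => T (k + c)) N] at h1
    have h2 := h c
    rw [add_comm c N] at h2
    simp only [zero_add, h2] at h1
    rw [← add_right_cancel h1]
    refine Finset.sum_congr rfl fun k _ => ?_
    congr 1
    omega

lemma sum_range_mul_of_period {T : ℕ → ℤ} {m : ℕ} (h : ∀ n, T (n + m) = T n) (q : ℕ) :
    ∑ k ∈ Finset.range (q * m), T k = q * ∑ k ∈ Finset.range m, T k := by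
  have hq : ∀ q n, T (n + q * m) = T n := by
    intro q
    induction q with
    | zero => simp
    | succ q ih => intro n; rw [Nat.succ_mul, ← add_assoc, h, ih]
  induction q with
  | zero => simp
  | succ q ih =>
    rw [Nat.succ_mul, Finset.sum_range_add, ih]
    simp only [add_comm (q * m), hq]
    push_cast
    ring

/-- An edge whose value is congruent to `F n` gets label `1` or `0` according to whether
`F n` is a nonzero square mod `p`. -/
lemma flcEdgeLabel_eq {a b : ℤ} {p : ℕ} (hp : p.Prime) {x y n : ℕ}
    (h : fibAB a b x + fibAB a b y ≡ fibAB a b n [ZMOD (p : ℤ)]) :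
    flcEdgeLabel a b p s(x, y) = if jacobiSym (fibAB a b n) p = 1 then 1 else 0 := by
  have hj : jacobiSym (fibAB a b x + fibAB a b y) p = jacobiSym (fibAB a b n) p :=
    jacobiSym.mod_left' h
  simp only [flcEdgeLabel, Sym2.lift_mk, hj]
  split_ifs with h1 h2 h2
  · have := Fact.mk hp
    rw [← hj, ← jacobiSym.legendreSym.to_jacobiSym,
      (legendreSym.eq_zero_iff p _).2 ((ZMod.intCast_zmod_eq_zero_iff_dvd _ _).2 h1)] at h2
    exact absurd h2 (by norm_num)
  · rfl
  · simp [h2]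
  · rcases jacobiSym.trichotomy (fibAB a b n) p with h | h | h <;> simp_all

/-- The edges of the wheel on `N + 1` vertices: `inl k` is the spoke to `k + 1`, and `inr k` is the
rim edge from `k + 1` to its cyclic successor. -/
def wheelEdge (N : ℕ) : Fin N ⊕ Fin N → Sym2 (Fin (N + 1))
  | .inl k => s(0, k.succ)
  | .inr k => s(k.succ, if h : (k : ℕ) + 1 < N then Fin.succ ⟨k + 1, h⟩ else
      Fin.succ ⟨0, by have := k.2; omega⟩)

lemma wheelEdge_injective {N : ℕ} (hN : 3 ≤ N) : Function.Injective (wheelEdge N) := by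
  rintro (⟨k, hk⟩ | ⟨k, hk⟩) (⟨l, hl⟩ | ⟨l, hl⟩) h <;>
    simp only [wheelEdge] at h <;>
    (try split_ifs at h) <;>
    simp [Fin.ext_iff] at h ⊢ <;> omega

lemma wheelG_edgeSet {N : ℕ} (hN : 3 ≤ N) :
    (wheelG (N + 1)).edgeSet = Set.range (wheelEdge N) := by
  ext e
  constructor
  · have key : ∀ i j : Fin (N + 1), i ≠ j →
        ((i : ℕ) = 0 ∨ (i : ℕ) + 1 = (j : ℕ) ∨ ((i : ℕ) = 1 ∧ (j : ℕ) = N + 1 - 1)) →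
        s(i, j) ∈ Set.range (wheelEdge N) := by
      rintro ⟨i, hi⟩ ⟨j, hj⟩ hne h
      simp only [ne_eq, Fin.mk.injEq] at hne h
      rcases Nat.eq_zero_or_pos i with h0 | h0
      · refine ⟨.inl ⟨j - 1, by omega⟩, ?_⟩
        simp [wheelEdge, Fin.ext_iff]
        omega
      · rcases h with h | h | h
        · omega
        · refine ⟨.inr ⟨i - 1, by omega⟩, ?_⟩
          simp only [wheelEdge]
          split_ifs <;> simp [Fin.ext_iff] at * <;> omega
        · refine ⟨.inr ⟨N - 1, by omega⟩, ?_⟩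
          simp only [wheelEdge]
          split_ifs <;> simp [Fin.ext_iff] at * <;> omega
    induction e with | _ i j => ?_
    rw [SimpleGraph.mem_edgeSet, wheelG, SimpleGraph.fromRel_adj]
    rintro ⟨hne, h | h⟩
    · exact key i j hne h
    · rw [Sym2.eq_swap]
      exact key j i hne.symm h
  · rintro ⟨⟨k, hk⟩ | ⟨k, hk⟩, rfl⟩ <;> simp only [wheelEdge] <;> (try split_ifs) <;>
      simp only [SimpleGraph.mem_edgeSet, wheelG, SimpleGraph.fromRel_adj] <;>
      simp [Fin.ext_iff] <;> omega

/-- If the value of edge `x` is congruent to `F (g x)`, then `e(1) - e(0)` is the sum of the signs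
at the indices `g x`. -/
lemma flcCount_sub {V E : Type*} [Fintype E] {G : SimpleGraph V} {a b : ℤ} {p : ℕ} {f : V → ℕ}
    {φ : E → Sym2 V} (hφ : Function.Injective φ) (hG : G.edgeSet = Set.range φ) (g : E → ℕ)
    (hg : ∀ x, flcEdgeLabel a b p ((φ x).map f) =
      if jacobiSym (fibAB a b (g x)) p = 1 then 1 else 0) :
    (flcCount G a b p f 1 : ℤ) - flcCount G a b p f 0 = ∑ x, flcSign a b p (g x) := by
  have hc : ∀ i, flcCount G a b p f i = (Finset.univ.filter fun x =>
      (if jacobiSym (fibAB a b (g x)) p = 1 then 1 else 0) = i).card := by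
    intro i
    rw [flcCount, ← Set.ncard_coe_finset, ← Set.ncard_image_of_injective _ hφ, hG]
    congr 1
    ext e
    simp only [Set.mem_ofPred_eq, Set.mem_range, Set.mem_image, Finset.coe_filter,
      Finset.mem_univ, true_and]
    constructor
    · rintro ⟨⟨x, rfl⟩, h⟩
      exact ⟨x, by rw [← hg, h], rfl⟩
    · rintro ⟨x, h, rfl⟩
      exact ⟨⟨x, rfl⟩, by rw [hg, h]⟩
  rw [hc, hc, Finset.card_filter, Finset.card_filter]
  push_cast
  rw [← Finset.sum_sub_distrib]
  refine Finset.sum_congr rfl fun x _ => ?_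
  by_cases h : jacobiSym (fibAB a b (g x)) p = 1 <;> simp [flcSign, h]

/-- For `p ∣ b` the sequence vanishes mod `p` and all signs are `-1`. -/
lemma not_dvd_of_isPLPrime {b : ℤ} {p : ℕ} (hp : p.Prime) (hPL : IsPLPrime 0 b p 0)
    (hpos : 0 < pisanoAB 0 b p) : ¬ (p : ℤ) ∣ b := by
  intro hd
  have hF : ∀ n, (p : ℤ) ∣ fibAB 0 b n ∧ (p : ℤ) ∣ fibAB 0 b (n + 1) := by
    intro n
    induction n with
    | zero => exact ⟨dvd_zero _, hd⟩
    | succ n ih => exact ⟨ih.2, dvd_add ih.1 ih.2⟩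
  have := Fact.mk hp
  have hs : ∀ n, flcSign 0 b p n = -1 := by
    intro n
    rw [flcSign, ← jacobiSym.legendreSym.to_jacobiSym,
      (legendreSym.eq_zero_iff p _).2 ((ZMod.intCast_zmod_eq_zero_iff_dvd _ _).2 (hF n).1)]
    simp
  have h := flcSign_sum_pisano 0 b p
  rw [← hPL] at h
  simp [hs] at h
  omega

/-- For `b ≠ 0`, an odd prime `p` that is a `0`-PL prime relative to
`(0,b)`, and `q ≥ 1`, the wheel graph on `q·π_p(0,b) + 1` vertices is a `(0,b)`-FLC
graph modulo `p`. -/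
theorem wheel_isFLCGraph (b : ℤ) (hb : b ≠ 0) (p : ℕ) (hp : p.Prime)
    (hodd : Odd p) (hPL : IsPLPrime 0 b p 0) (q : ℕ) (hq : 1 ≤ q) :
    IsFLCGraph (wheelG (q * pisanoAB 0 b p + 1)) 0 b p := by
  refine ⟨finCongr (Fintype.card_fin _).symm, ?_⟩
  simp only [finCongr_apply, Fin.val_cast]
  rcases Nat.eq_zero_or_pos (pisanoAB 0 b p) with h0 | hpos
  · have he : (wheelG (q * pisanoAB 0 b p + 1)).edgeSet = ∅ := by
      rw [h0, SimpleGraph.edgeSet_eq_empty]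
      exact Subsingleton.elim (α := SimpleGraph (Fin 1)) _ _
    simp [flcCount, he]
  have hper : ∀ n, fibAB 0 b (n + pisanoAB 0 b p) ≡ fibAB 0 b n [ZMOD (p : ℤ)] :=
    (Nat.sInf_mem (Nat.nonempty_of_pos_sInf hpos)).2
  have hnd := not_dvd_of_isPLPrime hp hPL hpos
  have h3 : 3 ≤ pisanoAB 0 b p := by
    by_contra hlt
    have h := hper 0
    have : pisanoAB 0 b p = 1 ∨ pisanoAB 0 b p = 2 := by omega
    rcases this with h1 | h1 <;> rw [h1] at h <;> simp only [fibAB, zero_add] at h <;>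
      exact hnd (Int.modEq_zero_iff_dvd.1 h)
  have hN3 : 3 ≤ q * pisanoAB 0 b p := h3.trans (Nat.le_mul_of_pos_left _ hq)
  have hTp : ∀ n, flcSign 0 b p (n + pisanoAB 0 b p) = flcSign 0 b p n := by
    intro n
    rw [flcSign, flcSign, jacobiSym.mod_left' (hper n)]
  have hsum : ∑ k ∈ Finset.range (q * pisanoAB 0 b p), flcSign 0 b p k = 0 := by
    rw [sum_range_mul_of_period hTp, flcSign_sum_pisano, ← hPL, mul_zero]
  have hperN : ∀ n, fibAB 0 b (n + q * pisanoAB 0 b p) ≡ fibAB 0 b n [ZMOD (p : ℤ)] := by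
    clear hsum hN3 hq
    induction q with
    | zero => intro n; simp
    | succ q ih =>
      intro n
      rw [Nat.succ_mul, ← add_assoc]
      exact (hper _).trans (ih n)
  generalize q * pisanoAB 0 b p = N at *
  have hTN : ∀ n, flcSign 0 b p (n + N) = flcSign 0 b p n := by
    intro n
    rw [flcSign, flcSign, jacobiSym.mod_left' (hperN n)]
  have hmain := flcCount_sub (a := 0) (b := b) (p := p) (f := fun v : Fin (N + 1) => (v : ℕ))
    (wheelEdge_injective hN3) (wheelG_edgeSet hN3)
    (Sum.elim (fun k => (k : ℕ) + 1) (fun k => (k : ℕ) + 3)) (by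
      rintro (k | k)
      · exact flcEdgeLabel_eq hp (by simp [fibAB])
      · simp only [wheelEdge, Sum.elim_inr]
        by_cases hk : (k : ℕ) + 1 < N
        · rw [dif_pos hk]
          exact flcEdgeLabel_eq hp (by simp [fibAB])
        · rw [dif_neg hk]
          -- the closing edge: `F N + F 1 ≡ F 0 + F 1 = F 2 ≡ F (2 + N)`
          have hkN : (k : ℕ) + 1 = N := by have := k.2; omega
          refine flcEdgeLabel_eq hp ?_
          have e1 : ((k.succ : Fin (N + 1)) : ℕ) = 0 + N := by simp [hkN]
          have e2 : (k : ℕ) + 3 = 2 + N := by omega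
          beta_reduce
          rw [e1, e2]
          exact ((hperN 0).add_right _).trans (hperN 2).symm)
  rw [Fintype.sum_sum_type] at hmain
  simp only [Sum.elim_inl, Sum.elim_inr] at hmain
  rw [Fin.sum_univ_eq_sum_range (fun k => flcSign 0 b p (k + 1)),
    Fin.sum_univ_eq_sum_range (fun k => flcSign 0 b p (k + 3)),
    sum_range_shift_of_period hTN, sum_range_shift_of_period hTN, hsum] at hmain
  rw [abs_le]
  constructor <;> linarith
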